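/- Let d, n, s be positive integers with gcd(s,n)=1, d ≥ 3 and n = d(d−1)+g for some g ∈ {1,…,d−1}. For a, b ∈ F_{q^n} and each t ∈ {0,1,…,d−1}, define c_{d−1,t} ∈ F_{q^n} as the sum, over all (t+1)-tuples (i_0,…,i_t) of nonnegative integers with i_0+⋯+i_t = d−1−t, of the product [∏_{m=0}^{t−1} ∏_{j=1}^{i_m} σ^{d(d − i_0 − ⋯ − i_{m−1} − j − (m+1)) + g + m}(a)] · [∏_{j=1}^{i_t} σ^{d(i_t − j) + t + g}(a)] · [∏_{u=0}^{t−1} σ^{d(d−2 − i_0 − ⋯ − i_u − u) + u + g}(b)], where empty products equal 1 and powers of σ are taken modulo n. Then the F_q-dimension of the kernel of a·x + b·x^σ − x^{σ^d} equals d if and only if a ≠ 0 and the following system holds: c_{d−1,0} = (−1)^g · (∏_{i=0}^{g−1} σ^i(b)) · (∏_{i=0}^{g−1} σ^i(a))^{−1}; for every v with 0 ≤ v ≤ g−1, c_{d−1,d−g+v} = (−1)^v · (∏_{i=0}^{v−1} σ^i(b)) · (∏_{i=0}^{v} σ^i(a))^{−1}; and c_{d−1,t} = 0 for every t with 1 ≤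 t ≤ d−g−1. -/

import Mathlib

open Finset in
/-- The coefficient `c_{d-1,t}` from Theorem `th:main`: the sum over all `(t+1)`-tuples
`(i_0, …, i_t)` of nonnegative integers with `i_0 + ⋯ + i_t = d-1-t` of the products
`[∏_{m=0}^{t-1} ∏_{j=1}^{i_m} σ^{d(d - i_0 - ⋯ - i_{m-1} - j - (m+1)) + g + m}(a)] ·
 [∏_{j=1}^{i_t} σ^{d(i_t - j) + t + g}(a)] ·
 [∏_{u=0}^{t-1} σ^{d(d-2 - i_0 - ⋯ - i_u - u) + u + g}(b)]`,
with powers of `σ` taken as integer powers (`σ` has order `n`, so this is "modulo n"). -/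
noncomputable def cCoeff {K L : Type*} [Field K] [Field L] [Algebra K L]
    (σ : L ≃ₐ[K] L) (d g t : ℕ) (a b : L) : L :=
  ∑ iv ∈ Finset.Nat.antidiagonalTuple (t + 1) (d - 1 - t),
    (fun I : ℕ → ℕ =>
      (fun S : ℕ → ℕ =>
        (∏ m ∈ range t, ∏ j ∈ range (I m),
            (σ ^ ((d : ℤ) * ((d : ℤ) - (S m : ℤ) - ((j : ℤ) + 1) - ((m : ℤ) + 1))
              + (g : ℤ) + (m : ℤ))) a) *
        (∏ j ∈ range (I t),
            (σ ^ ((d : ℤ) * ((I t : ℤ) - ((j : ℤ) + 1)) + (t : ℤ) + (g : ℤ))) a) *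
        (∏ u ∈ range t,
            (σ ^ ((d : ℤ) * ((d : ℤ) - 2 - (S (u + 1) : ℤ) - (u : ℤ))
              + (u : ℤ) + (g : ℤ))) b))
      (fun m => ∑ u ∈ range m, I u))
    (fun m => if h : m < t + 1 then iv ⟨m, h⟩ else 0)

section Helpers
open Finset

theorem aux_sum_cons {M : Type*} [AddCommMonoid M] (k n : ℕ) (f : (Fin (k+1) → ℕ) → M) :
    ∑ iv ∈ Finset.Nat.antidiagonalTuple (k+1) n, f iv
      = ∑ p ∈ HasAntidiagonal.antidiagonal n, ∑ x ∈ Finset.Nat.antidiagonalTuple k p.2,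
          f (Fin.cons p.1 x : Fin (k+1) → ℕ) := by
  rw [Finset.sum_sigma']
  refine Finset.sum_bij' (fun iv _ => ⟨(iv 0, ∑ i, Fin.tail iv i), Fin.tail iv⟩)
    (fun z _ => (Fin.cons z.1.1 z.2 : Fin (k+1) → ℕ)) ?_ ?_ ?_ ?_ ?_
  · intro iv h
    rw [Finset.Nat.mem_antidiagonalTuple, Fin.sum_univ_succ] at h
    simp only [mem_sigma, HasAntidiagonal.mem_antidiagonal, Finset.Nat.mem_antidiagonalTuple]
    exact ⟨h, trivial⟩
  · rintro ⟨⟨i, j⟩, x⟩ h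
    simp only [mem_sigma, HasAntidiagonal.mem_antidiagonal, Finset.Nat.mem_antidiagonalTuple] at h ⊢
    rw [Fin.sum_cons, h.2, h.1]
  · intro iv h
    simp
  · rintro ⟨⟨i, j⟩, x⟩ h
    simp only [mem_sigma, HasAntidiagonal.mem_antidiagonal, Finset.Nat.mem_antidiagonalTuple] at h
    simp [h.2]
  · intro iv h
    simp

/-- path weights, by first run -/
def auxW {R : Type*} [CommRing R] (A B : ℕ → ℕ → R) : ℕ → ℕ → ℕ → ℕ → R
  | 0, k, l, m => ∏ j ∈ range k, A (l + j) m
  | t+1, k, l, m => ∑ p ∈ HasAntidiagonal.antidiagonal k,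
      (∏ j ∈ range p.1, A (l + j) m) * B (l + p.1) m * auxW A B t p.2 (l + p.1 + 1) (m + 1)

theorem auxW_zero_succ {R : Type*} [CommRing R] (A B : ℕ → ℕ → R) (k l m : ℕ) :
    auxW A B 0 (k+1) l m = A l m * auxW A B 0 k (l+1) m := by
  simp only [auxW, prod_range_succ']
  rw [mul_comm]
  congr 1
  refine prod_congr rfl fun j _ => ?_
  congr 1; omega

theorem auxW_succ_zero {R : Type*} [CommRing R] (A B : ℕ → ℕ → R) (t l m : ℕ) :
    auxW A B (t+1) 0 l m = B l m * auxW A B t 0 (l+1) (m+1) := by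
  simp [auxW]

theorem auxW_succ_succ {R : Type*} [CommRing R] (A B : ℕ → ℕ → R) (t k l m : ℕ) :
    auxW A B (t+1) (k+1) l m = A l m * auxW A B (t+1) k (l+1) m
      + B l m * auxW A B t (k+1) (l+1) (m+1) := by
  rw [auxW, Finset.Nat.sum_antidiagonal_succ, add_comm]
  congr 1
  · rw [auxW, mul_sum]
    refine sum_congr rfl fun p _ => ?_
    simp only [prod_range_succ']
    have e : ∀ j, l + (j+1) = l + 1 + j := fun j => by omega
    rw [e p.1, add_zero, prod_congr rfl (fun j _ => by rw [e j])]
    ring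
  · simp

theorem aux_path {R M : Type*} [CommRing R] [AddCommGroup M] [Module R M]
    (A B : ℕ → ℕ → R) (Y : ℕ → ℕ → M) (N : ℕ)
    (hY : ∀ l m, l < N → m ≤ l → Y l m = A l m • Y (l+1) m + B l m • Y (l+1) (m+1)) :
    ∀ k l m, l + k = N → m ≤ l →
      Y l m = ∑ t ∈ range (k+1), auxW A B t (k - t) l m • Y N (m + t) := by
  intro k
  induction k with
  | zero => intro l m h hm; simp at h; subst h; simp [auxW]
  | succ k ih =>
    intro l m h hm
    rw [hY l m (by omega) hm, ih (l+1) m (by omega) (by omega),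
      ih (l+1) (m+1) (by omega) (by omega)]
    have key : ∀ t ∈ range (k+1+1), auxW A B t (k + 1 - t) l m • Y N (m + t)
        = (if t ≤ k then (A l m * auxW A B t (k - t) (l+1) m) • Y N (m + t) else 0)
        + (if 1 ≤ t then (B l m * auxW A B (t-1) (k + 1 - t) (l+1) (m+1)) • Y N (m + t) else 0) := by
      intro t ht
      rw [mem_range] at ht
      rcases t with _ | t
      · simp only [Nat.sub_zero, zero_le, if_true, auxW_zero_succ]
        simp
      · rcases Nat.lt_or_ge t k with h1 | h1
        · rw [if_pos (by omega), if_pos (by omega), ← add_smul]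
          have e1 : k + 1 - (t+1) = (k - (t+1)) + 1 := by omega
          rw [e1, auxW_succ_succ]
          simp
        · have : t = k := by omega
          subst this
          rw [if_neg (by omega), if_pos (by omega)]
          simp [auxW_succ_zero]
    rw [sum_congr rfl key, sum_add_distrib, smul_sum, smul_sum]
    congr 1
    · rw [sum_range_succ _ (k+1), if_neg (by omega), add_zero]
      refine sum_congr rfl fun t ht => ?_
      rw [mem_range] at ht
      rw [if_pos (by omega), smul_smul]
    · rw [sum_range_succ' _ (k+1)]
      rw [if_neg (show ¬ (1 ≤ 0) by omega), add_zero]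
      refine sum_congr rfl fun t ht => ?_
      rw [if_pos (by omega), smul_smul]
      have e : k + 1 - (t+1) = k - t := by omega
      have e2 : m + 1 + t = m + (t+1) := by omega
      rw [e, e2]; rfl

/-- extension by zero of a tuple -/
def auxI (t : ℕ) (iv : Fin (t+1) → ℕ) : ℕ → ℕ := fun m => if h : m < t + 1 then iv ⟨m, h⟩ else 0

theorem auxI_cons_zero (t i : ℕ) (x : Fin (t+1) → ℕ) :
    auxI (t+1) (Fin.cons i x : Fin (t+2) → ℕ) 0 = i := by
  simp [auxI]

theorem auxI_cons_succ (t i : ℕ) (x : Fin (t+1) → ℕ) (m : ℕ) :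
    auxI (t+1) (Fin.cons i x : Fin (t+2) → ℕ) (m+1) = auxI t x m := by
  unfold auxI
  by_cases h : m < t + 1
  · rw [dif_pos h, dif_pos (by omega)]
    exact Fin.cons_succ (α := fun _ => ℕ) i x ⟨m, h⟩
  · rw [dif_neg h, dif_neg (by omega)]

theorem auxW_eq {R : Type*} [CommRing R] (A B : ℕ → ℕ → R) :
    ∀ t k l m, auxW A B t k l m = ∑ iv ∈ Finset.Nat.antidiagonalTuple (t + 1) k,
      (∏ r ∈ range (t+1), ∏ j ∈ range (auxI t iv r),
        A (l + (∑ u ∈ range r, auxI t iv u) + r + j) (m + r)) *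
      ∏ r ∈ range t, B (l + (∑ u ∈ range (r+1), auxI t iv u) + r) (m + r) := by
  intro t
  induction t with
  | zero => intro k l m; simp [auxW, auxI]
  | succ t ih =>
    intro k l m
    rw [aux_sum_cons, auxW]
    refine sum_congr rfl fun p _ => ?_
    rw [ih, mul_sum]
    refine sum_congr rfl fun x _ => ?_
    conv_rhs => rw [prod_range_succ' _ (t+1), prod_range_succ' (fun r =>
      B (l + (∑ u ∈ range (r+1), auxI (t+1) (Fin.cons p.1 x : Fin (t+2) → ℕ) u) + r) (m + r)) t]
    have hs : ∀ r, ∑ u ∈ range (r+1), auxI (t+1) (Fin.cons p.1 x : Fin (t+2) → ℕ) u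
        = ∑ u ∈ range r, auxI t x u + p.1 := by
      intro r
      rw [sum_range_succ', auxI_cons_zero]
      simp only [auxI_cons_succ]
    simp only [hs, auxI_cons_succ, auxI_cons_zero, range_zero, sum_empty, add_zero, zero_add]
    have e1 : ∀ S r j, l + p.1 + 1 + S + r + j = l + (S + p.1) + (r+1) + j := by intros; omega
    have e2 : ∀ S r, l + p.1 + 1 + S + r = l + (S + p.1) + (r+1) := by intros; omega
    have e3 : ∀ r, m + 1 + r = m + (r+1) := by intros; omega
    simp only [e1, e2, e3]
    ring

theorem cCoeff_eq {K L : Type*} [Field K] [Field L] [Algebra K L]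
    (σ : L ≃ₐ[K] L) (d g t : ℕ) (a b : L) (ht : t + 1 ≤ d) :
    cCoeff σ d g t a b = auxW
      (fun l m => (σ ^ ((d : ℤ) * ((d : ℤ) - 2 - l) + g + m)) a)
      (fun l m => (σ ^ ((d : ℤ) * ((d : ℤ) - 2 - l) + g + m)) b) t (d - 1 - t) 0 0 := by
  rw [auxW_eq]
  unfold cCoeff
  refine sum_congr rfl fun iv hiv => ?_
  change (∏ m ∈ range t, ∏ j ∈ range (auxI t iv m),
            (σ ^ ((d : ℤ) * ((d : ℤ) - ((∑ u ∈ range m, auxI t iv u : ℕ) : ℤ) - ((j : ℤ) + 1) - ((m : ℤ) + 1))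
              + (g : ℤ) + (m : ℤ))) a) *
        (∏ j ∈ range (auxI t iv t),
            (σ ^ ((d : ℤ) * ((auxI t iv t : ℤ) - ((j : ℤ) + 1)) + (t : ℤ) + (g : ℤ))) a) *
        (∏ u ∈ range t,
            (σ ^ ((d : ℤ) * ((d : ℤ) - 2 - ((∑ u ∈ range (u+1), auxI t iv u : ℕ) : ℤ) - (u : ℤ))
              + (u : ℤ) + (g : ℤ))) b) = _
  have hS : (∑ u ∈ range t, auxI t iv u) + auxI t iv t = d - 1 - t := by
    rw [Finset.Nat.mem_antidiagonalTuple] at hiv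
    rw [← hiv, ← sum_range_succ, Finset.sum_range]
    refine sum_congr rfl fun i _ => ?_
    simp only [auxI]
    rw [dif_pos i.2]
  rw [prod_range_succ _ t]
  congr 1
  · congr 1
    · refine prod_congr rfl fun m _ => prod_congr rfl fun j _ => ?_
      congr 2
      push_cast; ring
    · refine prod_congr rfl fun j _ => ?_
      congr 2
      have : (auxI t iv t : ℤ) = d - 1 - t - ((∑ u ∈ range t, auxI t iv u : ℕ) : ℤ) := by omega
      rw [this]
      push_cast; ring
  · refine prod_congr rfl fun m _ => ?_
    congr 2
    push_cast; ring

theorem aux_reduce {K L : Type*} [Field K] [Field L] [Algebra K L]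
    (σ : L ≃ₐ[K] L) (d g n : ℕ) (a b : L) (hd : 3 ≤ d) (hn : n = d * (d - 1) + g)
    {M : Type*} [AddCommGroup M] [Module L M] (y : ℕ → M)
    (hy : ∀ e, e + d ≤ n → y (e + d) = (σ ^ e) a • y e + (σ ^ e) b • y (e+1)) :
    y n = ∑ t ∈ range d, cCoeff σ d g t a b • y (g + t) := by
  have := aux_path (fun l m : ℕ => (σ ^ ((d : ℤ) * ((d : ℤ) - 2 - l) + g + m)) a)
      (fun l m : ℕ => (σ ^ ((d : ℤ) * ((d : ℤ) - 2 - l) + g + m)) b)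
      (fun l m => y (d * (d - 1 - l) + g + m)) (d-1) ?_ (d-1) 0 0 (by simp) le_rfl
  · simp only [Nat.sub_zero, add_zero, ← hn, Nat.sub_self, mul_zero, zero_add] at this
    rw [this, Nat.sub_add_cancel (by omega)]
    refine sum_congr rfl fun t ht => ?_
    rw [mem_range] at ht
    rw [cCoeff_eq σ d g t a b (by omega)]
  · intro l m hl hm
    obtain ⟨r, rfl⟩ : ∃ r, d = l + 2 + r := ⟨d - 2 - l, by omega⟩
    have e1 : l + 2 + r - 1 - l = r + 1 := by omega
    have e2 : l + 2 + r - 1 - (l+1) = r := by omega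
    simp only [e1, e2]
    have e3 : (l + 2 + r) * (r + 1) + g + m = ((l + 2 + r) * r + g + m) + (l + 2 + r) := by ring
    rw [e3, hy]
    · have e4 : ((l + 2 + r : ℕ) : ℤ) * (((l + 2 + r : ℕ) : ℤ) - 2 - l) + g + m
          = (((l + 2 + r) * r + g + m : ℕ) : ℤ) := by push_cast; ring
      rw [e4, zpow_natCast]
      rfl
    · rw [hn]
      have : l + 2 + r - 1 = l + 1 + r := by omega
      rw [this]
      nlinarith

/-- remainder coefficients -/
def auxR {K L : Type*} [Field K] [Field L] [Algebra K L]
    (σ : L ≃ₐ[K] L) (d g : ℕ) (a : L) (b : L) (c : ℕ → L) (i : ℕ) : L :=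
  (if g ≤ i then c (i - g) else 0) + (if i < g then c (d - g + i) * (σ ^ i) a else 0)
    + (if 1 ≤ i ∧ i ≤ g then c (d - g + (i - 1)) * (σ ^ (i - 1)) b else 0)
    - (if i = 0 then 1 else 0)

theorem aux_reduce2 {K L : Type*} [Field K] [Field L] [Algebra K L]
    (σ : L ≃ₐ[K] L) (d g n : ℕ) (a b : L) (hd : 3 ≤ d) (hg1 : 1 ≤ g) (hg2 : g ≤ d - 1)
    (hn : n = d * (d - 1) + g)
    {M : Type*} [AddCommGroup M] [Module L M] (y : ℕ → M)
    (hy : ∀ e, e + d ≤ n → y (e + d) = (σ ^ e) a • y e + (σ ^ e) b • y (e+1)) :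
    y n - y 0 = ∑ i ∈ range d, auxR σ d g a b (fun t => cCoeff σ d g t a b) i • y i := by
  rw [aux_reduce σ d g n a b hd hn y hy]
  generalize hc : (fun t => cCoeff σ d g t a b) = c
  have hc' : ∀ t, cCoeff σ d g t a b = c t := fun t => by rw [← hc]
  simp only [hc', auxR, sub_smul, add_smul, sum_add_distrib, sum_sub_distrib, ite_smul, zero_smul, one_smul]
  obtain ⟨w, rfl⟩ : ∃ w, d = w + 1 + g := ⟨d - 1 - g, by omega⟩
  have hw : w + 1 + g - g = w + 1 := by omega
  rw [hw]
  congr 1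
  · rw [sum_range_add, add_assoc]
    congr 1
    · rw [show w + 1 + g = g + (w+1) by omega, sum_range_add _ g (w+1)]
      symm
      rw [add_eq_right.mpr]
      · refine sum_congr rfl fun t _ => ?_
        rw [if_pos (by omega)]; simp
      · apply sum_eq_zero
        intro i hi; rw [mem_range] at hi; rw [if_neg (by omega)]
    · have : ∀ v ∈ range g, c (w + 1 + v) • y (g + (w + 1 + v)) =
          (c (w + 1 + v) * (σ ^ v) a) • y v + (c (w+1+v) * (σ ^ v) b) • y (v+1) := by
        intro v hv
        rw [mem_range] at hv
        rw [show g + (w + 1 + v) = v + (w + 1 + g) by omega, hy, smul_add, smul_smul, smul_smul]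
        rw [hn]
        have : w + 1 + g - 1 = w + g := by omega
        rw [this]; nlinarith
      rw [sum_congr rfl this, sum_add_distrib]
      congr 1
      · rw [show w + 1 + g = g + (w+1) by omega, sum_range_add]
        symm
        rw [add_eq_left.mpr]
        · refine sum_congr rfl fun t ht => ?_
          rw [mem_range] at ht
          rw [if_pos ht]
        · apply sum_eq_zero; intro i _; rw [if_neg (by omega)]
      · rw [show w + 1 + g = (g + 1) + w by omega, sum_range_add]
        symm
        rw [add_eq_left.mpr]
        · rw [sum_range_succ', if_neg (by omega), add_zero]
          refine sum_congr rfl fun t ht => ?_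
          rw [mem_range] at ht
          rw [if_pos (by omega)]; rfl
        · apply sum_eq_zero; intro i _; rw [if_neg (by omega)]
  · rw [sum_ite_eq' (range (w+1+g)) 0]; simp

theorem aux_system {K L : Type*} [Field K] [Field L] [Algebra K L]
    (σ : L ≃ₐ[K] L) (d g : ℕ) (a b : L) (hg1 : 1 ≤ g) (hg2 : g + 1 ≤ d)
    (c : ℕ → L) :
    (∀ i < d, auxR σ d g a b c i = 0) ↔
     (a ≠ 0 ∧ c 0 = (-1 : L) ^ g * (∏ i ∈ Finset.range g, (σ ^ i) b)
                * (∏ i ∈ Finset.range g, (σ ^ i) a)⁻¹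
          ∧ (∀ v : ℕ, v ≤ g - 1 →
              c (d - g + v)
                = (-1 : L) ^ v * (∏ i ∈ Finset.range v, (σ ^ i) b)
                  * (∏ i ∈ Finset.range (v + 1), (σ ^ i) a)⁻¹)
          ∧ (∀ t : ℕ, 1 ≤ t → t ≤ d - g - 1 → c t = 0)) := by
  have hne : ∀ (i : ℕ), a ≠ 0 → (σ ^ i) a ≠ 0 := fun i h => (map_ne_zero (σ ^ i)).mpr h
  constructor
  · intro h
    have h0 : c (d - g) * a = 1 := by
      have := h 0 (by omega)
      simp only [auxR] at this
      rw [if_neg (by omega), if_pos (by omega), if_neg (by omega)] at this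
      simp [sub_eq_zero] at this
      exact this
    have ha : a ≠ 0 := right_ne_zero_of_mul_eq_one h0
    have h1 : ∀ v : ℕ, v ≤ g - 1 →
              c (d - g + v)
                = (-1 : L) ^ v * (∏ i ∈ Finset.range v, (σ ^ i) b)
                  * (∏ i ∈ Finset.range (v + 1), (σ ^ i) a)⁻¹ := by
      intro v
      induction v with
      | zero =>
        intro _
        simp
        exact eq_inv_of_mul_eq_one_left h0
      | succ v ih =>
        intro hv
        have := h (v+1) (by omega)
        simp only [auxR] at this
        rw [if_neg (by omega), if_pos (by omega), if_pos (by omega), if_neg (by omega),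
          Nat.add_sub_cancel, ih (by omega)] at this
        have hp : ∏ i ∈ Finset.range (v + 1), (σ ^ i) a ≠ 0 := prod_ne_zero_iff.mpr fun i _ => hne i ha
        rw [prod_range_succ _ v, prod_range_succ _ (v+1)]
        have h2 := hne (v+1) ha
        field_simp at this ⊢
        rw [pow_succ (-1 : L)]
        linear_combination this
    refine ⟨ha, ?_, h1, ?_⟩
    · have := h g (by omega)
      simp only [auxR] at this
      rw [if_pos (by omega), if_neg (by omega), if_pos (by omega), if_neg (by omega),
          h1 _ le_rfl] at this
      obtain ⟨w, rfl⟩ : ∃ w, g = w + 1 := ⟨g-1, by omega⟩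
      simp only [Nat.add_sub_cancel, Nat.sub_self] at this
      rw [prod_range_succ (fun i => (σ ^ i) b)]
      linear_combination this
    · intro t ht1 ht2
      have := h (g + t) (by omega)
      simp only [auxR] at this
      rw [if_pos (by omega), if_neg (by omega), if_neg (by omega), if_neg (by omega)] at this
      simpa using this
  · rintro ⟨ha, h0, h1, h2⟩ i hi
    simp only [auxR]
    rcases lt_trichotomy i g with hig | rfl | hig
    · rw [if_neg (by omega), if_pos (by omega)]
      rcases i with _ | v
      · have := h1 0 (by omega)
        simp at this
        simp [this, ha]
      · rw [if_pos (by omega), if_neg (by omega), Nat.add_sub_cancel, h1 _ (by omega), h1 _ (by omega)]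
        have hp : ∏ i ∈ Finset.range (v + 1), (σ ^ i) a ≠ 0 := prod_ne_zero_iff.mpr fun i _ => hne i ha
        rw [prod_range_succ _ v, prod_range_succ _ (v+1)]
        have h2 := hne (v+1) ha
        field_simp
        rw [pow_succ (-1 : L)]
        ring
    · rw [if_pos (by omega), if_neg (by omega), if_pos (by omega), if_neg (by omega),
          h1 _ le_rfl, Nat.sub_self, h0]
      obtain ⟨w, rfl⟩ : ∃ w, i = w + 1 := ⟨i-1, by omega⟩
      simp only [Nat.add_sub_cancel]
      rw [prod_range_succ (fun i => (σ ^ i) b), pow_succ]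
      ring
    · rw [if_pos (by omega), if_neg (by omega), if_neg (by omega), if_neg (by omega),
        h2 _ (by omega) (by omega)]
      simp

theorem aux_indep {K L : Type*} [Field K] [Field L] [Algebra K L] [FiniteDimensional K L]
    (σ : L ≃ₐ[K] L) (hfix : ∀ x, σ x = x → ∃ k : K, algebraMap K L k = x) :
    ∀ (D : ℕ) (c : ℕ → L) (V : Submodule K L), D ≤ Module.finrank K V →
      (∀ x ∈ V, ∑ i ∈ range D, c i * (σ ^ i) x = 0) → ∀ i < D, c i = 0 := by
  intro D
  induction D with
  | zero => intro c V _ _ i hi; omega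
  | succ D ih =>
    intro c V hV h
    have hVne : V ≠ ⊥ := by
      rintro rfl
      simp at hV
    obtain ⟨u, huV, hu⟩ := Submodule.exists_mem_ne_zero_of_ne_bot hVne
    let T : L →ₗ[K] L := (σ.toLinearMap - LinearMap.id) ∘ₗ LinearMap.mulLeft K u⁻¹
    have hT : ∀ x, T x = σ (u⁻¹ * x) - u⁻¹ * x := fun x => rfl
    have hrank : D ≤ Module.finrank K (V.map T) := by
      have h1 := LinearMap.finrank_range_add_finrank_ker (T.domRestrict V)
      rw [LinearMap.range_domRestrict] at h1
      have h2 : Module.finrank K (LinearMap.ker (T.domRestrict V)) ≤ 1 := by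
        refine finrank_le_one ⟨⟨u, huV⟩, ?_⟩ ?_
        · simp [hT, hu]
        · rintro ⟨⟨w, hwV⟩, hw⟩
          have hw' : σ (u⁻¹ * w) - u⁻¹ * w = 0 := by
            rw [← hT]; simpa using hw
          obtain ⟨k, hk⟩ := hfix _ (sub_eq_zero.mp hw')
          refine ⟨k, ?_⟩
          apply Subtype.ext; apply Subtype.ext
          change k • u = w
          rw [Algebra.smul_def, hk]
          field_simp
      omega
    let E : ℕ → L := fun i => ∑ j ∈ range (i+1), c j * (σ ^ j) u
    have hED : E D = 0 := h u huV
    have abel : ∀ (z : ℕ → L) (N : ℕ), ∑ i ∈ range (N+1), c i * (σ ^ i) u * z i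
        = E N * z N - ∑ i ∈ range N, E i * (z (i+1) - z i) := by
      intro z N
      induction N with
      | zero => simp [E]
      | succ N ihN =>
        rw [sum_range_succ, ihN, sum_range_succ _ N]
        have : E (N+1) = E N + c (N+1) * (σ ^ (N+1)) u := sum_range_succ _ _
        rw [this]; ring
    have hE : ∀ i < D, E i = 0 := by
      refine ih E (V.map T) hrank ?_
      rintro _ ⟨x, hx, rfl⟩
      have h3 := abel (fun i => (σ ^ i) (u⁻¹ * x)) D
      rw [hED] at h3
      have h4 : ∑ i ∈ range (D+1), c i * (σ ^ i) u * (σ ^ i) (u⁻¹ * x) = 0 := by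
        rw [← h x hx]
        refine sum_congr rfl fun i _ => ?_
        rw [mul_assoc, ← map_mul, mul_inv_cancel_left₀ hu]
      rw [h4] at h3
      have h5 : ∑ i ∈ range D, E i * (σ ^ i) (T x)
          = ∑ i ∈ range D, E i * ((σ ^ (i+1)) (u⁻¹ * x) - (σ ^ i) (u⁻¹ * x)) := by
        refine sum_congr rfl fun i _ => ?_
        rw [hT, map_sub, pow_succ]; rfl
      rw [h5]
      linear_combination h3
    have hE' : ∀ i < D + 1, E i = 0 := by
      intro i hi
      rcases Nat.lt_succ_iff_lt_or_eq.mp hi with h | rfl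
      · exact hE i h
      · exact hED
    intro i hi
    have h6 : c i * (σ ^ i) u = 0 := by
      rcases i with _ | i
      · simpa [E] using hE' 0 hi
      · have : E (i+1) = E i + c (i+1) * (σ ^ (i+1)) u := sum_range_succ _ _
        rw [hE' _ hi, hE' i (by omega)] at this
        simpa using this.symm
    exact (mul_eq_zero.mp h6).resolve_right ((map_ne_zero (σ ^ i)).mpr hu)

theorem aux_fix (q : ℕ) (K L : Type*) [Field K] [Field L] [Fintype K] [Fintype L] [Algebra K L]
    (hcardK : Fintype.card K = q) (n : ℕ) (hcardL : Fintype.card L = q ^ n)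
    (s : ℕ) (hsn : Nat.gcd s n = 1) (x : L) (hx : x ^ q ^ s = x) :
    ∃ k : K, algebraMap K L k = x := by
  classical
  have hit : ∀ m, (fun z : L => z ^ q)^[m] x = x ^ q ^ m := by
    intro m
    induction m with
    | zero => simp
    | succ m ih => rw [Function.iterate_succ_apply', ih, ← pow_mul, pow_succ]
  have h1 : Function.IsPeriodicPt (fun z : L => z ^ q) s x := by
    rw [Function.IsPeriodicPt, Function.IsFixedPt, hit, hx]
  have h2 : Function.IsPeriodicPt (fun z : L => z ^ q) n x := by
    rw [Function.IsPeriodicPt, Function.IsFixedPt, hit, ← hcardL, FiniteField.pow_card]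
  have h3 := h1.gcd h2
  rw [hsn] at h3
  have h4 : x ^ q = x := by simpa [Function.IsPeriodicPt, Function.IsFixedPt] using h3
  have hq : 1 < q := hcardK ▸ Fintype.one_lt_card
  let P : Polynomial L := Polynomial.X ^ q - Polynomial.X
  have hP : P ≠ 0 := FiniteField.X_pow_card_sub_X_ne_zero L hq
  let S : Finset L := univ.image (algebraMap K L)
  have hS : S.card = q := by
    rw [card_image_of_injective _ (algebraMap K L).injective, card_univ, hcardK]
  have hsub : S ⊆ P.roots.toFinset := by
    intro z hz
    obtain ⟨k, -, rfl⟩ := mem_image.mp hz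
    simp only [Multiset.mem_toFinset, Polynomial.mem_roots hP, P, Polynomial.IsRoot.def, Polynomial.eval_sub, Polynomial.eval_pow, Polynomial.eval_X]
    rw [← map_pow, ← hcardK, FiniteField.pow_card, sub_self]
  have hle : P.roots.toFinset.card ≤ S.card := by
    rw [hS]
    refine (Multiset.toFinset_card_le _).trans ((Polynomial.card_roots' P).trans ?_)
    exact (FiniteField.X_pow_card_sub_X_natDegree_eq L hq).le
  have heq := eq_of_subset_of_card_le hsub hle
  have : x ∈ S := by
    rw [heq]
    simp [Polynomial.mem_roots hP, P, Polynomial.IsRoot.def, h4]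
  obtain ⟨k, -, hk⟩ := mem_image.mp this
  exact ⟨k, hk⟩

theorem aux_pow_n (q : ℕ) (K L : Type*) [Field K] [Field L] [Fintype K] [Fintype L] [Algebra K L]
    (n : ℕ) (hcardL : Fintype.card L = q ^ n)
    (s : ℕ) (σ : L ≃ₐ[K] L) (hσ : ∀ x : L, σ x = x ^ q ^ s) (x : L) : (σ ^ n) x = x := by
  have : ∀ m, (σ ^ m) x = x ^ (q ^ s) ^ m := by
    intro m
    induction m with
    | zero => simp
    | succ m ih => rw [pow_succ', AlgEquiv.mul_apply, ih, hσ, ← pow_mul, ← pow_succ]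
  rw [this, ← pow_mul, mul_comm, pow_mul, ← hcardL, FiniteField.pow_card_pow]

end Helpers

/-- (Theorem `th:main`.) With `σ : x ↦ x^{q^s}`, `gcd(s,n)=1`, `d ≥ 3`,
`n = d(d-1)+g`, `1 ≤ g ≤ d-1`: the `F_q`-dimension of the kernel of
`x ↦ a·x + b·σ(x) − σ^d(x)` equals `d` iff `a ≠ 0` and the coefficients `c_{d-1,t}`
satisfy the stated system of equations. -/
theorem stmt_3 (p q : ℕ) (hp : p.Prime) (hq : ∃ m : ℕ, 0 < m ∧ q = p ^ m)
    (K L : Type*) [Field K] [Field L] [Fintype K] [Fintype L] [Algebra K L]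
    (hcardK : Fintype.card K = q)
    (n : ℕ) (hn : 0 < n) (hcardL : Fintype.card L = q ^ n)
    (s : ℕ) (hs : 0 < s) (hsn : Nat.gcd s n = 1)
    (σ : L ≃ₐ[K] L) (hσ : ∀ x : L, σ x = x ^ q ^ s)
    (d g : ℕ) (hd : 3 ≤ d) (hg1 : 1 ≤ g) (hg2 : g ≤ d - 1)
    (hnval : n = d * (d - 1) + g)
    (a b : L) :
    Module.finrank K
      (LinearMap.ker
        (LinearMap.mulLeft K a + LinearMap.mulLeft K b ∘ₗ σ.toLinearMap
          - (σ ^ d : L ≃ₐ[K] L).toLinearMap)) = d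
      ↔ (a ≠ 0
          ∧ cCoeff σ d g 0 a b
              = (-1 : L) ^ g * (∏ i ∈ Finset.range g, (σ ^ i) b)
                * (∏ i ∈ Finset.range g, (σ ^ i) a)⁻¹
          ∧ (∀ v : ℕ, v ≤ g - 1 →
              cCoeff σ d g (d - g + v) a b
                = (-1 : L) ^ v * (∏ i ∈ Finset.range v, (σ ^ i) b)
                  * (∏ i ∈ Finset.range (v + 1), (σ ^ i) a)⁻¹)
          ∧ (∀ t : ℕ, 1 ≤ t → t ≤ d - g - 1 → cCoeff σ d g t a b = 0)) := by
  classical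
  have hσn : ∀ x, (σ ^ n) x = x := aux_pow_n q K L n hcardL s σ hσ
  have hfix : ∀ x, σ x = x → ∃ k : K, algebraMap K L k = x := fun x hx =>
    aux_fix q K L hcardK n hcardL s hsn x (by rw [← hσ, hx])
  have hq1 : 1 < q := hcardK ▸ Fintype.one_lt_card
  have hrankL : Module.finrank K L = n := by
    have := Module.card_eq_pow_finrank (K := K) (V := L)
    rw [hcardL, hcardK] at this
    exact (Nat.pow_right_injective hq1 this).symm
  have hdn : d ≤ n := by
    rw [hnval]; obtain ⟨w, rfl⟩ : ∃ w, d = w + 2 := ⟨d - 2, by omega⟩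
    simp only [show w + 2 - 1 = w + 1 by omega]; nlinarith
  rw [← aux_system σ d g a b hg1 (by omega) (fun t => cCoeff σ d g t a b)]
  set f : L →ₗ[K] L := LinearMap.mulLeft K a + LinearMap.mulLeft K b ∘ₗ σ.toLinearMap
          - (σ ^ d : L ≃ₐ[K] L).toLinearMap with hf
  have hfx : ∀ x, f x = a * x + b * σ x - (σ ^ d) x := fun x => rfl
  have hσfx : ∀ e x, (σ ^ e) (f x)
      = (σ ^ e) a * (σ ^ e) x + (σ ^ e) b * (σ ^ (e+1)) x - (σ ^ (e + d)) x := by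
    intro e x
    rw [hfx, map_sub, map_add, map_mul, map_mul, pow_succ, pow_add]
    rfl
  constructor
  · intro hdim
    refine aux_indep σ hfix d _ (LinearMap.ker f) hdim.ge ?_
    intro x hx
    have := aux_reduce2 σ d g n a b hd hg1 hg2 hnval (fun e => (σ ^ e) x) ?_
    · simp only [hσn, pow_zero, AlgEquiv.one_apply, sub_self, smul_eq_mul] at this
      exact this.symm
    · intro e _
      have h1 := hσfx e x
      rw [LinearMap.mem_ker.mp hx, map_zero] at h1
      simp only [smul_eq_mul]
      linear_combination h1
  · intro hr
    apply le_antisymm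
    · by_contra hlt
      push Not at hlt
      have := aux_indep σ hfix (d+1)
        (fun i => (if i = 0 then a else 0) + (if i = 1 then b else 0) - (if i = d then 1 else 0))
        (LinearMap.ker f) hlt ?_ d (by omega)
      · simp [show d ≠ 0 by omega, show d ≠ 1 by omega] at this
      · intro x hx
        refine Eq.trans ?_ ((hfx x).symm.trans (LinearMap.mem_ker.mp hx))
        simp only [sub_mul, add_mul, ite_mul, zero_mul, one_mul, Finset.sum_sub_distrib,
          Finset.sum_add_distrib]
        rw [Finset.sum_ite_eq', Finset.sum_ite_eq', Finset.sum_ite_eq']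
        simp [show d ≠ 0 by omega]
    · let sg : ℕ → (L →ₗ[K] L) := fun e => (σ ^ e).toLinearMap
      let J : Submodule L (L →ₗ[K] L) :=
        Submodule.span L (((Finset.range (n - d)).image (fun e => sg e ∘ₗ f) : Finset _) : Set (L →ₗ[K] L))
      let y : ℕ → (L →ₗ[K] L) ⧸ J := fun e =>
        J.mkQ (if e = n then sg n + sg (n - d) ∘ₗ f else sg e)
      have hrec : ∀ e, e + d ≤ n → y (e + d) = (σ ^ e) a • y e + (σ ^ e) b • y (e+1) := by
        intro e he
        simp only [y]
        rw [if_neg (show e ≠ n by omega), if_neg (show e + 1 ≠ n by omega), ← map_smul, ← map_smul,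
          ← map_add]
        have hcomp : sg e ∘ₗ f = (σ ^ e) a • sg e + (σ ^ e) b • sg (e+1) - sg (e + d) := by
          ext x; exact hσfx e x
        rcases he.lt_or_eq with h1 | h1
        · rw [if_neg (by omega), eq_comm, ← sub_eq_zero, ← map_sub, ← hcomp,
            Submodule.mkQ_apply, Submodule.Quotient.mk_eq_zero]
          apply Submodule.subset_span
          simp only [Finset.coe_image, Set.mem_image, Finset.coe_range, Set.mem_Iio]
          exact ⟨e, by omega, rfl⟩
        · rw [if_pos h1]
          congr 1
          have h2 : n - d = e := by omega
          rw [h2, hcomp, h1]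
          abel
      have hred := aux_reduce2 σ d g n a b hd hg1 hg2 hnval y hrec
      rw [Finset.sum_eq_zero (fun i hi => by rw [hr i (Finset.mem_range.mp hi), zero_smul])] at hred
      simp only [y] at hred
      rw [if_pos trivial, if_neg (by omega), ← map_sub, Submodule.mkQ_apply,
        Submodule.Quotient.mk_eq_zero] at hred
      have hsn0 : sg n = sg 0 := by
        ext x; change (σ ^ n) x = (σ ^ 0) x; rw [hσn]; rfl
      rw [hsn0, add_sub_cancel_left] at hred
      have hex : ∃ h : ℕ → L, sg (n - d) ∘ₗ f = ∑ e ∈ Finset.range (n - d), h e • (sg e ∘ₗ f) := by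
        simp only [J, Finset.coe_image] at hred
        rw [Submodule.mem_span_image_finset_iff_exists_fun] at hred
        obtain ⟨h, hh⟩ := hred
        refine ⟨fun e => if he : e ∈ Finset.range (n - d) then h ⟨e, he⟩ else 0, ?_⟩
        rw [← hh, ← Finset.sum_coe_sort (Finset.range (n - d))]
        refine Finset.sum_congr rfl fun i _ => ?_
        simp only [dif_pos i.2]
      obtain ⟨h, hh⟩ := hex
      have hle : Module.finrank K (LinearMap.range f) ≤ n - d := by
        by_contra hlt
        push Not at hlt
        have := aux_indep σ hfix (n - d + 1)
          (fun i => if i = n - d then 1 else - h i) (LinearMap.range f) hlt ?_ (n - d) (by omega)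
        · simp at this
        · rintro _ ⟨x, rfl⟩
          have h1 := LinearMap.congr_fun hh x
          rw [LinearMap.sum_apply] at h1
          rw [Finset.sum_range_succ, if_pos rfl, one_mul]
          have h2 : (σ ^ (n-d)) (f x) = ∑ e ∈ Finset.range (n - d), h e * (σ ^ e) (f x) := h1
          rw [h2, ← Finset.sum_add_distrib]
          apply Finset.sum_eq_zero
          intro i hi
          rw [if_neg (by have := Finset.mem_range.mp hi; omega)]
          ring
      have := LinearMap.finrank_range_add_finrank_ker f
      omega
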